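/- arXiv:2212.11225 — 3 statements merged into one kernel-verified Lean document; each statement's English description precedes it below -/
import Mathlib

section
/- Let I ∈ Ins(Ω,H,K) and J ∈ Ins(Λ,H,V) be two compatible instruments. Then X and Y are compatible for every choice of X ∈ {I, A^I, Φ^I} and Y ∈ {J, A^J, Φ^J}; i.e., compatibility of the instruments implies compatibility when either instrument is replaced by its induced POVM or its induced channel. -/
open scoped Kronecker ComplexOrder
open Matrix

noncomputable section

/-- Linear maps between matrix algebras, representing super-operators
`L(H) → L(K)` for finite-dimensional Hilbert spaces with index types `dH`, `dK`. -/
abbrev MatMap (dH dK : Type) : Type := Matrix dH dH ℂ →ₗ[ℂ] Matrix dK dK ℂ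

variable {Ω Λ dH dK dV dA dA' : Type}

/-- The Choi matrix of a super-operator. -/
def choiMatrix [DecidableEq dH] (Φ : MatMap dH dK) : Matrix (dH × dK) (dH × dK) ℂ :=
  fun p q => Φ (Matrix.single p.1 q.1 1) p.2 q.2

/-- Complete positivity of a super-operator (positivity of its Choi matrix). -/
def IsCP [Fintype dH] [DecidableEq dH] [Fintype dK] (Φ : MatMap dH dK) : Prop :=
  (choiMatrix Φ).PosSemidef

/-- A quantum state: a positive semidefinite matrix of unit trace. -/
def IsState [Fintype dH] (ρ : Matrix dH dH ℂ) : Prop := ρ.PosSemidef ∧ ρ.trace = 1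

/-- Trace-nonincreasing super-operator. -/
def IsTNI [Fintype dH] [Fintype dK] (Φ : MatMap dH dK) : Prop :=
  ∀ ρ : Matrix dH dH ℂ, ρ.PosSemidef → (Φ ρ).trace ≤ ρ.trace

/-- Trace-preserving super-operator. -/
def IsTP [Fintype dH] [Fintype dK] (Φ : MatMap dH dK) : Prop :=
  ∀ ρ : Matrix dH dH ℂ, (Φ ρ).trace = ρ.trace

/-- A quantum instrument with outcome set `Ω` from system `dH` to system `dK`:
a family of completely positive trace-nonincreasing maps summing to a channel. -/
structure Instrument (Ω dH dK : Type) [Fintype Ω] [Fintype dH] [DecidableEq dH]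
    [Fintype dK] : Type where
  op : Ω → MatMap dH dK
  cp : ∀ x, IsCP (op x)
  tni : ∀ x, IsTNI (op x)
  tp : IsTP (∑ x, op x)

/-- A quantum channel: a completely positive trace-preserving super-operator. -/
structure Channel (dH dK : Type) [Fintype dH] [DecidableEq dH] [Fintype dK] : Type where
  map : MatMap dH dK
  cp : IsCP map
  tp : IsTP map

/-- A POVM with outcome set `Ω` on system `d`. -/
structure POVM (Ω d : Type) [Fintype Ω] [Fintype d] [DecidableEq d] : Type where
  elem : Ω → Matrix d d ℂ
  pos : ∀ x, (elem x).PosSemidef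
  sum_eq : ∑ x, elem x = 1

/-- The effect (induced POVM element) of an operation `Φ`:
the unique matrix `A` with `tr[A ρ] = tr[Φ ρ]` for all `ρ`. -/
def dualId [Fintype dH] [DecidableEq dH] [Fintype dK] (Φ : MatMap dH dK) :
    Matrix dH dH ℂ :=
  fun i j => (Φ (Matrix.single j i 1)).trace

/-- Partial trace over the first tensor factor. -/
def ptraceL [Fintype dA] (M : Matrix (dA × dK) (dA × dK) ℂ) : Matrix dK dK ℂ :=
  fun i j => ∑ a, M (a, i) (a, j)

/-- Partial trace over the second tensor factor. -/
def ptraceR [Fintype dV] (M : Matrix (dK × dV) (dK × dV) ℂ) : Matrix dK dK ℂ :=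
  fun i j => ∑ b, M (i, b) (j, b)

/-- Compatibility of two instruments: existence of a joint instrument whose
partial-trace marginals (summed over the other outcome) reproduce both instruments
on all states. -/
def InsCompatible [Fintype Ω] [Fintype Λ] [Fintype dH] [DecidableEq dH] [Fintype dK]
    [Fintype dV] (I : Instrument Ω dH dK) (J : Instrument Λ dH dV) : Prop :=
  ∃ G : Instrument (Ω × Λ) dH (dK × dV),
    (∀ y, ∀ ρ : Matrix dH dH ℂ, IsState ρ → ∑ x, ptraceL (G.op (x, y) ρ) = J.op y ρ) ∧
    (∀ x, ∀ ρ : Matrix dH dH ℂ, IsState ρ → ∑ y, ptraceR (G.op (x, y) ρ) = I.op x ρ)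

/-- Compatibility of an instrument and a channel (a one-outcome instrument). -/
def InsChCompatible [Fintype Ω] [Fintype dH] [DecidableEq dH] [Fintype dK] [Fintype dV]
    (I : Instrument Ω dH dK) (Ψ : Channel dH dV) : Prop :=
  ∃ G : Instrument Ω dH (dK × dV),
    (∀ ρ : Matrix dH dH ℂ, IsState ρ → ∑ x, ptraceL (G.op x ρ) = Ψ.map ρ) ∧
    (∀ x, ∀ ρ : Matrix dH dH ℂ, IsState ρ → ptraceR (G.op x ρ) = I.op x ρ)

/-- Compatibility of two channels. -/
def ChCompatible [Fintype dH] [DecidableEq dH] [Fintype dK] [Fintype dV]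
    (Φ : Channel dH dK) (Ψ : Channel dH dV) : Prop :=
  ∃ Γ : Channel dH (dK × dV),
    (∀ ρ : Matrix dH dH ℂ, IsState ρ → ptraceL (Γ.map ρ) = Ψ.map ρ) ∧
    (∀ ρ : Matrix dH dH ℂ, IsState ρ → ptraceR (Γ.map ρ) = Φ.map ρ)

/-- Compatibility of a POVM and an instrument: existence of a joint instrument `G`
with `∑ x, G.op (x, y) = J.op y` and whose induced POVM has the POVM `A` as a margin. -/
def POVMInsCompatible [Fintype Ω] [Fintype Λ] [Fintype dH] [DecidableEq dH] [Fintype dK]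
    (A : POVM Ω dH) (J : Instrument Λ dH dK) : Prop :=
  ∃ G : Instrument (Ω × Λ) dH dK,
    (∀ y, ∑ x, G.op (x, y) = J.op y) ∧
    (∀ x, ∑ y, dualId (G.op (x, y)) = A.elem x)

/-- Compatibility (joint measurability) of two POVMs. -/
def POVMCompatible [Fintype Ω] [Fintype Λ] [Fintype dH] [DecidableEq dH]
    (A : POVM Ω dH) (B : POVM Λ dH) : Prop :=
  ∃ G : POVM (Ω × Λ) dH,
    (∀ y, ∑ x, G.elem (x, y) = B.elem y) ∧
    (∀ x, ∑ y, G.elem (x, y) = A.elem x)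

/-- Compatibility of a POVM and a channel: existence of an instrument implementing both. -/
def POVMChCompatible [Fintype Ω] [Fintype dH] [DecidableEq dH] [Fintype dK]
    (A : POVM Ω dH) (Ψ : Channel dH dK) : Prop :=
  ∃ G : Instrument Ω dH dK,
    (∑ x, G.op x) = Ψ.map ∧ ∀ x, dualId (G.op x) = A.elem x

/-- Instrument postprocessing: `I ⪯ J` if `I_x = ∑ y, R^(y)_x ∘ J_y` for
a family of instruments `R^(y)`. -/
def Postprocessed [Fintype Ω] [Fintype Λ] [Fintype dH] [DecidableEq dH] [Fintype dK]
    [Fintype dV] [DecidableEq dV] (I : Instrument Ω dH dK) (J : Instrument Λ dH dV) : Prop :=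
  ∃ R : Λ → Instrument Ω dV dK, ∀ x, I.op x = ∑ y, (R y).op x ∘ₗ J.op y

/-- An instrument `I` does not disturb an instrument `J`: `J_y ∘ Φ^I = J_y`. -/
def NonDisturbs [Fintype Ω] [Fintype Λ] [Fintype dH] [DecidableEq dH] [Fintype dV]
    (I : Instrument Ω dH dH) (J : Instrument Λ dH dV) : Prop :=
  ∀ y, J.op y ∘ₗ (∑ x, I.op x) = J.op y

/-- An instrument `I` does not disturb a channel `Ψ`: `Ψ ∘ Φ^I = Ψ`. -/
def InsNonDisturbsCh [Fintype Ω] [Fintype dH] [DecidableEq dH] [Fintype dV]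
    (I : Instrument Ω dH dH) (Ψ : Channel dH dV) : Prop :=
  Ψ.map ∘ₗ (∑ x, I.op x) = Ψ.map

/-- An instrument `I` does not disturb a POVM `A`:
the statistics of `A` are unchanged by the channel induced by `I`. -/
def InsNonDisturbsPOVM [Fintype Ω] [Fintype Λ] [Fintype dH] [DecidableEq dH]
    (I : Instrument Ω dH dH) (A : POVM Λ dH) : Prop :=
  ∀ y, ∀ ρ : Matrix dH dH ℂ,
    (A.elem y * ((∑ x, I.op x) ρ)).trace = (A.elem y * ρ).trace

/-- A POVM `A` does not disturb an instrument `J`: some instrument measuring `A`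
does not disturb `J`. -/
def POVMNonDisturbs [Fintype Ω] [Fintype Λ] [Fintype dH] [DecidableEq dH] [Fintype dV]
    (A : POVM Ω dH) (J : Instrument Λ dH dV) : Prop :=
  ∃ I : Instrument Ω dH dH, (∀ x, dualId (I.op x) = A.elem x) ∧ NonDisturbs I J

/-- A POVM `A` does not disturb a channel `Ψ`. -/
def POVMNonDisturbsCh [Fintype Ω] [Fintype dH] [DecidableEq dH] [Fintype dV]
    (A : POVM Ω dH) (Ψ : Channel dH dV) : Prop :=
  ∃ I : Instrument Ω dH dH, (∀ x, dualId (I.op x) = A.elem x) ∧ InsNonDisturbsCh I Ψ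

/-- A POVM `A` does not disturb a POVM `B`. -/
def POVMNonDisturbsPOVM [Fintype Ω] [Fintype Λ] [Fintype dH] [DecidableEq dH]
    (A : POVM Ω dH) (B : POVM Λ dH) : Prop :=
  ∃ I : Instrument Ω dH dH, (∀ x, dualId (I.op x) = A.elem x) ∧ InsNonDisturbsPOVM I B

/-- A sharp (projection-valued) POVM. -/
def IsSharp [Fintype Ω] [Fintype dH] [DecidableEq dH] (A : POVM Ω dH) : Prop :=
  ∀ x, A.elem x * A.elem x = A.elem x

/-- `(H_A, W, E)` is a dilation of the instrument `I`:
`W` is an isometry `H → H_A ⊗ K` and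
`I_x(ρ) = Tr_{H_A}[W ρ W* (E(x) ⊗ 1_K)]` on all states. -/
def IsDilation [Fintype Ω] [Fintype dH] [DecidableEq dH] [Fintype dK] [DecidableEq dK]
    [Fintype dA] [DecidableEq dA] (I : Instrument Ω dH dK)
    (W : Matrix (dA × dK) dH ℂ) (E : POVM Ω dA) : Prop :=
  Wᴴ * W = 1 ∧
  ∀ x, ∀ ρ : Matrix dH dH ℂ, IsState ρ →
    I.op x ρ = ptraceL (W * ρ * Wᴴ * (E.elem x ⊗ₖ (1 : Matrix dK dK ℂ)))

/-- Minimality of a Stinespring isometry `W : H → H_A ⊗ K`: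
the span of `{(1 ⊗ B) W φ}` is everything. -/
def IsMinimalW [Fintype dH] [Fintype dK] [DecidableEq dK] [Fintype dA] [DecidableEq dA]
    (W : Matrix (dA × dK) dH ℂ) : Prop :=
  Submodule.span ℂ {v : (dA × dK) → ℂ |
    ∃ (B : Matrix dK dK ℂ) (φ : dH → ℂ),
      v = ((1 : Matrix dA dA ℂ) ⊗ₖ B) *ᵥ (W *ᵥ φ)} = ⊤

open scoped MatrixOrder in
/-- `IC` is the complementary instrument of the instrument dilated by `(W, E)`:
`IC_x(ρ) = Tr_K[(√E(x) ⊗ 1) W ρ W* (√E(x) ⊗ 1)]`. -/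
def IsComplementaryOf [Fintype Ω] [Fintype dH] [DecidableEq dH] [Fintype dK]
    [DecidableEq dK] [Fintype dA] [DecidableEq dA] (W : Matrix (dA × dK) dH ℂ) (E : POVM Ω dA)
    (IC : Instrument Ω dH dA) : Prop :=
  ∀ x, ∀ ρ : Matrix dH dH ℂ,
    IC.op x ρ =
      ptraceR ((CFC.sqrt (E.elem x) ⊗ₖ (1 : Matrix dK dK ℂ)) * (W * ρ * Wᴴ) *
        (CFC.sqrt (E.elem x) ⊗ₖ (1 : Matrix dK dK ℂ)))

/-- A measure-and-prepare instrument: `I_x(ρ) = tr[A(x) ρ] ξ_x`. -/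
def IsMeasureAndPrepare [Fintype Ω] [Fintype dH] [DecidableEq dH] [Fintype dK]
    [DecidableEq dK] (I : Instrument Ω dH dK) : Prop :=
  ∃ (A : POVM Ω dH) (ξ : Ω → Matrix dK dK ℂ),
    (∀ x, IsState (ξ x)) ∧
    ∀ x, ∀ ρ : Matrix dH dH ℂ, I.op x ρ = ((A.elem x * ρ).trace) • ξ x

/-- A pure state: a state which is a (rank-one) projection. -/
def IsPureState [Fintype dK] (ρ : Matrix dK dK ℂ) : Prop :=
  IsState ρ ∧ ρ * ρ = ρ

/-- A rank-1 POVM: every effect has rank at most one. -/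
def IsRankOnePOVM [Fintype Ω] [Fintype dH] [DecidableEq dH] (A : POVM Ω dH) : Prop :=
  ∀ x, (A.elem x).rank ≤ 1

/-- POVM postprocessing: `B(y) = ∑ x, ν x y • A(x)` for a stochastic matrix `ν`. -/
def POVMPostprocessed [Fintype Ω] [Fintype Λ] [Fintype dH] [DecidableEq dH]
    (B : POVM Λ dH) (A : POVM Ω dH) : Prop :=
  ∃ ν : Ω → Λ → ℝ, (∀ x y, 0 ≤ ν x y) ∧ (∀ x, ∑ y, ν x y = 1) ∧
    ∀ y, B.elem y = ∑ x, (ν x y : ℂ) • A.elem x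

/-- A measure-and-prepare instrument preparing pure states. -/
def IsMeasureAndPreparePure [Fintype Ω] [Fintype dH] [DecidableEq dH] [Fintype dK]
    [DecidableEq dK] (I : Instrument Ω dH dK) : Prop :=
  ∃ (A : POVM Ω dH) (ξ : Ω → Matrix dK dK ℂ),
    (∀ x, IsPureState (ξ x)) ∧
    ∀ x, ∀ ρ : Matrix dH dH ℂ, I.op x ρ = ((A.elem x * ρ).trace) • ξ x

/-- Partial trace over the first factor as a linear map. -/
def trL [Fintype dA] : Matrix (dA × dK) (dA × dK) ℂ →ₗ[ℂ] Matrix dK dK ℂ where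
  toFun := ptraceL
  map_add' M N := by ext i j; simp [ptraceL, Finset.sum_add_distrib]
  map_smul' c M := by ext i j; simp [ptraceL, Finset.mul_sum]

/-- Partial trace over the second factor as a linear map. -/
def trR [Fintype dV] : Matrix (dK × dV) (dK × dV) ℂ →ₗ[ℂ] Matrix dK dK ℂ where
  toFun := ptraceR
  map_add' M N := by ext i j; simp [ptraceR, Finset.sum_add_distrib]
  map_smul' c M := by ext i j; simp [ptraceR, Finset.mul_sum]

/-- The tensor swap as a linear map. -/
def swapMap : Matrix (dK × dV) (dK × dV) ℂ →ₗ[ℂ] Matrix (dV × dK) (dV × dK) ℂ where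
  toFun M := M.submatrix Prod.swap Prod.swap
  map_add' M N := rfl
  map_smul' c M := rfl

theorem trace_trL [Fintype dA] [Fintype dK] (M : Matrix (dA × dK) (dA × dK) ℂ) :
    (trL M).trace = M.trace := by
  simp only [trL, LinearMap.coe_mk, AddHom.coe_mk, ptraceL, Matrix.trace, Matrix.diag,
    Fintype.sum_prod_type]
  exact Finset.sum_comm

theorem trace_trR [Fintype dV] [Fintype dK] (M : Matrix (dK × dV) (dK × dV) ℂ) :
    (trR M).trace = M.trace := by
  simp only [trR, LinearMap.coe_mk, AddHom.coe_mk, ptraceR, Matrix.trace, Matrix.diag,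
    Fintype.sum_prod_type]

theorem trace_swapMap [Fintype dV] [Fintype dK] (M : Matrix (dK × dV) (dK × dV) ℂ) :
    (swapMap M).trace = M.trace := by
  simp only [swapMap, LinearMap.coe_mk, AddHom.coe_mk, Matrix.trace, Matrix.diag,
    Fintype.sum_prod_type, Matrix.submatrix_apply, Prod.swap]
  exact Finset.sum_comm

theorem trL_swapMap [Fintype dV] (M : Matrix (dK × dV) (dK × dV) ℂ) :
    trL (swapMap M) = trR M := rfl

theorem trR_swapMap [Fintype dK] (M : Matrix (dK × dV) (dK × dV) ℂ) :
    trR (swapMap M) = trL M := rfl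

theorem IsCP.sum {ι : Type} [Fintype dH] [DecidableEq dH] [Fintype dK] (s : Finset ι)
    (f : ι → MatMap dH dK) (h : ∀ i, IsCP (f i)) : IsCP (∑ i ∈ s, f i) := by
  have : choiMatrix (∑ i ∈ s, f i) = ∑ i ∈ s, choiMatrix (f i) := by
    ext p q
    simp [choiMatrix, Matrix.sum_apply]
  unfold IsCP
  rw [this]
  exact Matrix.posSemidef_sum s fun i _ => h i

theorem IsCP.trL [Fintype dH] [DecidableEq dH] [Fintype dK] [Fintype dA]
    {Φ : MatMap dH (dA × dK)} (h : IsCP Φ) : IsCP (_root_.trL ∘ₗ Φ) := by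
  have : choiMatrix (_root_.trL ∘ₗ Φ) = ∑ a : dA, (choiMatrix Φ).submatrix
      (fun p : dH × dK => (p.1, (a, p.2))) (fun p : dH × dK => (p.1, (a, p.2))) := by
    ext p q
    simp [choiMatrix, Matrix.sum_apply, _root_.trL, ptraceL]
  unfold IsCP
  rw [this]
  exact Matrix.posSemidef_sum _ fun i _ => Matrix.PosSemidef.submatrix h _

theorem IsCP.swapMap [Fintype dH] [DecidableEq dH] [Fintype dK] [Fintype dV]
    {Φ : MatMap dH (dK × dV)} (h : IsCP Φ) : IsCP (_root_.swapMap ∘ₗ Φ) :=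
  Matrix.PosSemidef.submatrix h (fun p : dH × (dV × dK) => (p.1, p.2.swap))

theorem IsCP.dualId [Fintype dH] [DecidableEq dH] [Fintype dK]
    {Φ : MatMap dH dK} (h : IsCP Φ) : (_root_.dualId Φ).PosSemidef := by
  have : _root_.dualId Φ = (∑ a : dK, (choiMatrix Φ).submatrix
      (fun p : dH => (p, a)) (fun p : dH => (p, a)))ᵀ := by
    ext p q
    simp [choiMatrix, Matrix.sum_apply, _root_.dualId, Matrix.trace]
  rw [this]
  exact (Matrix.posSemidef_sum _ fun i _ => Matrix.PosSemidef.submatrix h _).transpose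

/-- Linear maps that agree on all states are equal. -/
theorem ext_states [Fintype dH] [DecidableEq dH] {f g : MatMap dH dK}
    (h : ∀ ρ : Matrix dH dH ℂ, IsState ρ → f ρ = g ρ) : f = g := by
  have hpsd : ∀ ρ : Matrix dH dH ℂ, ρ.PosSemidef → f ρ = g ρ := by
    intro ρ hρ
    by_cases h0 : ρ.trace = 0
    · rw [hρ.trace_eq_zero_iff.1 h0]; simp
    · have hs : IsState (ρ.trace⁻¹ • ρ) :=
        ⟨hρ.smul (inv_nonneg.2 hρ.trace_nonneg), by simp [Matrix.trace_smul, h0]⟩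
      have := h _ hs
      rw [map_smul, map_smul] at this
      exact smul_right_injective _ (inv_ne_zero h0) this
  have hv : ∀ v : dH → ℂ, f (vecMulVec v (star v)) = g (vecMulVec v (star v)) :=
    fun v => hpsd _ (Matrix.posSemidef_vecMulVec_self_star v)
  have key : ∀ u v : dH → ℂ, f (vecMulVec u (star v)) = g (vecMulVec u (star v)) := by
    intro u v
    have e : vecMulVec u (star v) = (4 : ℂ)⁻¹ •
        (vecMulVec (u + v) (star (u + v)) - vecMulVec (u - v) (star (u - v))
        + Complex.I • vecMulVec (u + Complex.I • v) (star (u + Complex.I • v))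
        - Complex.I • vecMulVec (u - Complex.I • v) (star (u - Complex.I • v))) := by
      ext i j
      simp [vecMulVec_apply]
      ring_nf
      simp [Complex.I_sq, pow_succ]
      try ring_nf
    rw [e]
    simp only [map_smul, map_add, map_sub, hv]
  refine Matrix.ext_linearMap ℂ fun i j => ?_
  ext1
  simp only [LinearMap.comp_apply]
  have := key (Pi.single i 1) (Pi.single j 1)
  have e : vecMulVec (Pi.single i (1:ℂ)) (star (Pi.single j (1:ℂ))) = Matrix.single i j (1:ℂ) := by
    rw [← Pi.single_star, star_one, Matrix.single_eq_single_vecMulVec_single]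
  rw [e] at this
  exact this

/-- Merging the joint instrument's marginal equations into equalities of linear maps. -/
theorem InsCompatible.exists_joint
    [Fintype Ω] [Fintype Λ] [Fintype dH] [DecidableEq dH] [Fintype dK] [Fintype dV]
    {I : Instrument Ω dH dK} {J : Instrument Λ dH dV} (h : InsCompatible I J) :
    ∃ G : Instrument (Ω × Λ) dH (dK × dV),
      (∀ y, ∑ x, trL ∘ₗ G.op (x, y) = J.op y) ∧ (∀ x, ∑ y, trR ∘ₗ G.op (x, y) = I.op x) := by
  obtain ⟨G, h1, h2⟩ := h
  refine ⟨G, fun y => ext_states fun ρ hρ => ?_, fun x => ext_states fun ρ hρ => ?_⟩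
  · rw [← h1 y ρ hρ, LinearMap.sum_apply]; rfl
  · rw [← h2 x ρ hρ, LinearMap.sum_apply]; rfl

theorem dualId_sum {ι : Type} [Fintype dH] [DecidableEq dH] [Fintype dK] (s : Finset ι)
    (f : ι → MatMap dH dK) : dualId (∑ i ∈ s, f i) = ∑ i ∈ s, dualId (f i) := by
  ext i j
  simp [dualId, Matrix.sum_apply, Matrix.trace_sum]

theorem dualId_trL [Fintype dH] [DecidableEq dH] [Fintype dK] [Fintype dA]
    (Φ : MatMap dH (dA × dK)) : dualId (trL ∘ₗ Φ) = dualId Φ := by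
  ext i j
  simp [dualId, trace_trL]

theorem dualId_trR [Fintype dH] [DecidableEq dH] [Fintype dK] [Fintype dV]
    (Φ : MatMap dH (dK × dV)) : dualId (trR ∘ₗ Φ) = dualId Φ := by
  ext i j
  simp [dualId, trace_trR]

theorem InsCompatible.symm
    [Fintype Ω] [Fintype Λ] [Fintype dH] [DecidableEq dH] [Fintype dK] [Fintype dV]
    {I : Instrument Ω dH dK} {J : Instrument Λ dH dV} (h : InsCompatible I J) :
    InsCompatible J I := by
  obtain ⟨G, h1, h2⟩ := h
  refine ⟨⟨fun p => swapMap ∘ₗ G.op p.swap, fun p => (G.cp _).swapMap, fun p ρ hρ => ?_,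
    fun ρ => ?_⟩, fun x ρ hρ => ?_, fun y ρ hρ => ?_⟩
  · rw [LinearMap.comp_apply, trace_swapMap]
    exact G.tni _ ρ hρ
  · rw [← G.tp ρ, LinearMap.sum_apply, LinearMap.sum_apply, Matrix.trace_sum, Matrix.trace_sum]
    simp only [LinearMap.comp_apply, trace_swapMap]
    exact Equiv.sum_comp (Equiv.prodComm Λ Ω) (fun p => (G.op p ρ).trace)
  · exact h2 x ρ hρ
  · exact h1 y ρ hρ

section
variable [Fintype Ω] [Fintype Λ] [Fintype dH] [DecidableEq dH] [Fintype dK] [Fintype dV]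
  {I : Instrument Ω dH dK} {J : Instrument Λ dH dV}

theorem InsCompatible.insCh (h : InsCompatible I J) (ΦJ : Channel dH dV)
    (hΦJ : ΦJ.map = ∑ y, J.op y) : InsChCompatible I ΦJ := by
  obtain ⟨G, h1, h2⟩ := h.exists_joint
  have h2' : ∀ x ρ, trR ((∑ y, G.op (x, y)) ρ) = I.op x ρ := by
    intro x ρ
    rw [← h2 x]; simp
  refine ⟨⟨fun x => ∑ y, G.op (x, y), fun x => IsCP.sum _ _ fun y => G.cp _, fun x ρ hρ => ?_, ?_⟩,
    fun ρ _ => ?_, fun x ρ _ => h2' x ρ⟩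
  · rw [← trace_trR, h2']
    exact I.tni x ρ hρ
  · rw [← Fintype.sum_prod_type]; exact G.tp
  · change ∑ x, trL ((∑ y, G.op (x, y)) ρ) = _
    rw [hΦJ]
    simp only [← h1, LinearMap.sum_apply, map_sum, LinearMap.comp_apply]
    exact Finset.sum_comm

theorem InsCompatible.povmIns (h : InsCompatible I J) (AI : POVM Ω dH)
    (hAI : ∀ x, AI.elem x = dualId (I.op x)) : POVMInsCompatible AI J := by
  obtain ⟨G, h1, h2⟩ := h.exists_joint
  refine ⟨⟨fun p => trL ∘ₗ G.op p, fun p => (G.cp p).trL, fun p ρ hρ => ?_, fun ρ => ?_⟩,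
    h1, fun x => ?_⟩
  · rw [LinearMap.comp_apply, trace_trL]
    exact G.tni _ ρ hρ
  · rw [← G.tp ρ]
    simp [Matrix.trace_sum, trace_trL]
  · rw [hAI, ← h2, dualId_sum]
    simp only [dualId_trL, dualId_trR]

theorem POVMInsCompatible.povmCh {A : POVM Ω dH} (h : POVMInsCompatible A J)
    (hI : ∀ x, A.elem x = dualId (I.op x)) (ΦJ : Channel dH dV)
    (hΦJ : ΦJ.map = ∑ y, J.op y) : POVMChCompatible A ΦJ := by
  obtain ⟨G, h1, h2⟩ := h
  have hd : ∀ x, dualId (∑ y, G.op (x, y)) = dualId (I.op x) := fun x => by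
    rw [dualId_sum, h2, hI]
  have htr : ∀ x, (Matrix.traceLinearMap dV ℂ ℂ) ∘ₗ (∑ y, G.op (x, y)) =
      (Matrix.traceLinearMap dK ℂ ℂ) ∘ₗ I.op x := fun x => by
    refine Matrix.ext_linearMap ℂ fun i j => ?_
    ext1
    exact congrFun (congrFun (hd x) j) i
  refine ⟨⟨fun x => ∑ y, G.op (x, y), fun x => IsCP.sum _ _ fun y => G.cp _, fun x ρ hρ => ?_, ?_⟩,
    ?_, fun x => ?_⟩
  · exact (LinearMap.congr_fun (htr x) ρ).trans_le (I.tni x ρ hρ)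
  · rw [← Fintype.sum_prod_type]; exact G.tp
  · change ∑ x, ∑ y, G.op (x, y) = _
    rw [hΦJ, Finset.sum_comm]
    exact Finset.sum_congr rfl fun y _ => h1 y
  · rw [hI]; exact hd x

theorem InsCompatible.povm (h : InsCompatible I J) (AI : POVM Ω dH)
    (hAI : ∀ x, AI.elem x = dualId (I.op x)) (AJ : POVM Λ dH)
    (hAJ : ∀ y, AJ.elem y = dualId (J.op y)) : POVMCompatible AI AJ := by
  obtain ⟨G, h1, h2⟩ := h.povmIns AI hAI
  refine ⟨⟨fun p => dualId (G.op p), fun p => (G.cp p).dualId, ?_⟩, fun y => ?_, h2⟩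
  · rw [Fintype.sum_prod_type, ← AI.sum_eq]
    exact Finset.sum_congr rfl fun x _ => h2 x
  · rw [hAJ, ← h1, dualId_sum]

theorem InsCompatible.ch (h : InsCompatible I J) (ΦI : Channel dH dK)
    (hΦI : ΦI.map = ∑ x, I.op x) (ΦJ : Channel dH dV)
    (hΦJ : ΦJ.map = ∑ y, J.op y) : ChCompatible ΦI ΦJ := by
  obtain ⟨G, h1, h2⟩ := h.insCh ΦJ hΦJ
  refine ⟨⟨∑ x, G.op x, IsCP.sum _ _ G.cp, G.tp⟩, fun ρ hρ => ?_, fun ρ hρ => ?_⟩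
  · rw [← h1 ρ hρ]
    change trL ((∑ x, G.op x) ρ) = _
    rw [LinearMap.sum_apply, map_sum]; rfl
  · change trR ((∑ x, G.op x) ρ) = _
    rw [LinearMap.sum_apply, map_sum, hΦI, LinearMap.sum_apply]
    exact Finset.sum_congr rfl fun x _ => h2 x ρ hρ

end

/-- If instruments `I` and `J` are compatible, then `X` and `Y` are
compatible for every `X ∈ {I, A^I, Φ^I}` and `Y ∈ {J, A^J, Φ^J}`. -/
theorem compatible_all_induced_pairs
    [Fintype Ω] [Fintype Λ] [Fintype dH] [DecidableEq dH] [Fintype dK] [DecidableEq dK]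
    [Fintype dV] [DecidableEq dV]
    (I : Instrument Ω dH dK) (J : Instrument Λ dH dV)
    (ΦI : Channel dH dK) (hΦI : ΦI.map = ∑ x, I.op x)
    (AI : POVM Ω dH) (hAI : ∀ x, AI.elem x = dualId (I.op x))
    (ΦJ : Channel dH dV) (hΦJ : ΦJ.map = ∑ y, J.op y)
    (AJ : POVM Λ dH) (hAJ : ∀ y, AJ.elem y = dualId (J.op y))
    (h : InsCompatible I J) :
    InsChCompatible I ΦJ ∧ POVMInsCompatible AJ I ∧
    POVMInsCompatible AI J ∧ POVMCompatible AI AJ ∧ POVMChCompatible AI ΦJ ∧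
    InsChCompatible J ΦI ∧ POVMChCompatible AJ ΦI ∧ ChCompatible ΦI ΦJ := by
  exact ⟨h.insCh ΦJ hΦJ, h.symm.povmIns AJ hAJ, h.povmIns AI hAI, h.povm AI hAI AJ hAJ,
    (h.povmIns AI hAI).povmCh hAI ΦJ hΦJ, h.symm.insCh ΦI hΦI,
    (h.symm.povmIns AJ hAJ).povmCh hAJ ΦI hΦI, h.ch ΦI hΦI ΦJ hΦJ⟩
end
end

section
/- Let I ∈ Ins({0},ℂ²,ℂ²) be the one-outcome identity instrument (the identity channel on ℂ²) and let J ∈ Ins({0,1,2,3},ℂ²,ℂ²) be the instrument J_i(ρ) = (1/4) σ_i ρ σ_i, where σ_0 = I and σ_1, σ_2, σ_3 are the Pauli matrices. Then I and J are incompatible, although Φ^I and Φ^J are compatible channels and A^I and A^J are compatible POVMs. (The incompatibility follows because a joint instrument G for I and J would yield the channel E(ρ) = Σ_i (I⊗σ_i) G_i(ρ) (I⊗σ_i) satisfying Tr_{second factor}[E(ρ)] = ρ and Tr_{first factor}[E(ρ)] = ρ for all states ρ, i.e. a perfect broadcasting channel, which does not exist.) -/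
open scoped Kronecker ComplexOrder
open Matrix

noncomputable section

variable {Ω Λ dH dK dV dA dA' : Type}

/-- The identity and the three Pauli matrices on `ℂ²`. -/
def pauli : Fin 4 → Matrix (Fin 2) (Fin 2) ℂ :=
  ![1, !![0, 1; 1, 0], !![0, -Complex.I; Complex.I, 0], !![1, 0; 0, -1]]

/-- A positive semidefinite matrix with a vanishing diagonal entry has a vanishing column. -/
theorem psd_col_zero {n : Type} [Fintype n] [DecidableEq n] {A : Matrix n n ℂ}
    (hA : A.PosSemidef) {j : n} (h : A j j = 0) (i : n) : A i j = 0 := by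
  have h1 := (hA.dotProduct_mulVec_zero_iff (Pi.single j 1)).1 (by simp [h])
  have h2 := congrFun h1 i
  simpa using h2

/-- A positive semidefinite matrix with a vanishing diagonal entry has a vanishing row. -/
theorem psd_row_zero {n : Type} [Fintype n] [DecidableEq n] {A : Matrix n n ℂ}
    (hA : A.PosSemidef) {j : n} (h : A j j = 0) (i : n) : A j i = 0 := by
  have h1 := psd_col_zero hA h i
  rw [← hA.1.apply, h1, star_zero]

theorem isState_single (i : Fin 2) : IsState (Matrix.single i i (1 : ℂ)) := by
  refine ⟨?_, by simp⟩
  have : Matrix.single i i (1 : ℂ) = Matrix.diagonal (Pi.single i 1) := by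
    rw [Matrix.diagonal_single]
  rw [this]
  apply Matrix.PosSemidef.diagonal
  intro j
  by_cases h : j = i
  · subst h; simp
  · simp [h]

theorem isState_plus : IsState ((1 / 2 : ℂ) • (Matrix.single 0 0 1 + Matrix.single 0 1 1 +
    Matrix.single 1 0 1 + Matrix.single 1 1 1 : Matrix (Fin 2) (Fin 2) ℂ)) := by
  constructor
  · have h : (Matrix.single 0 0 1 + Matrix.single 0 1 1 +
      Matrix.single 1 0 1 + Matrix.single 1 1 1 : Matrix (Fin 2) (Fin 2) ℂ) =
      Matrix.vecMulVec (fun _ => 1) (star (fun _ => 1)) := by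
      ext i j
      fin_cases i <;> fin_cases j <;> simp [Matrix.single, Matrix.vecMulVec]
    rw [h]
    exact (Matrix.posSemidef_vecMulVec_self_star _).smul (by norm_num [Complex.le_def])
  · simp [Matrix.trace, Matrix.single]
    norm_num

theorem not_insCompatible_aux
    (I : Instrument (Fin 1) (Fin 2) (Fin 2))
    (hI : ∀ ρ : Matrix (Fin 2) (Fin 2) ℂ, I.op 0 ρ = ρ)
    (J : Instrument (Fin 4) (Fin 2) (Fin 2))
    (hJ : ∀ i, ∀ ρ : Matrix (Fin 2) (Fin 2) ℂ,
      J.op i ρ = (1 / 4 : ℂ) • (pauli i * ρ * pauli i)) : ¬ InsCompatible I J := by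
  rintro ⟨G, hL, hR⟩
  have hdiag : ∀ y i k v, 0 ≤ G.op (0, y) (Matrix.single i i 1) (k, v) (k, v) :=
    fun y i k v => (G.cp (0, y)).diag_nonneg (i := (i, (k, v)))
  have hC : (choiMatrix (G.op (0, 0))).PosSemidef := G.cp (0, 0)
  have hJ0 : ∀ ρ, J.op 0 ρ = (1 / 4 : ℂ) • ρ := by
    intro ρ; rw [hJ]; simp [pauli]
  -- vanishing from the first marginal
  have z1 : ∀ i v k, k ≠ i → choiMatrix (G.op (0, 0)) (i, (k, v)) (i, (k, v)) = 0 := by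
    intro i v k hk
    have h := congrFun (congrFun (hR 0 _ (isState_single i)) k) k
    rw [hI, Matrix.sum_apply] at h
    simp only [ptraceR] at h
    have e : Matrix.single i i (1 : ℂ) k k = 0 := by simp [Matrix.single, Ne.symm hk]
    rw [e] at h
    rw [Finset.sum_eq_zero_iff_of_nonneg
      (fun y _ => Finset.sum_nonneg fun b _ => hdiag y i k b)] at h
    have h0 := h 0 (Finset.mem_univ _)
    rw [Finset.sum_eq_zero_iff_of_nonneg (fun b _ => hdiag 0 i k b)] at h0
    exact h0 v (Finset.mem_univ _)
  have z2 : ∀ i v k, v ≠ i → choiMatrix (G.op (0, 0)) (i, (k, v)) (i, (k, v)) = 0 := by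
    intro i v k hv
    have h := congrFun (congrFun (hL 0 _ (isState_single i)) v) v
    rw [hJ0] at h
    simp only [ptraceL, Fin.sum_univ_one, Fin.isValue] at h
    have e : Matrix.single i i (1 : ℂ) v v = 0 := by simp [Matrix.single, Ne.symm hv]
    rw [Matrix.smul_apply, e, smul_zero] at h
    rw [Finset.sum_eq_zero_iff_of_nonneg (fun b _ => hdiag 0 i b v)] at h
    exact h k (Finset.mem_univ _)
  have key : ∀ i j a, G.op (0, 0) (Matrix.single i j 1) (a, 0) (a, 1) = 0 := by
    intro i j a
    change choiMatrix (G.op (0, 0)) (i, (a, 0)) (j, (a, 1)) = 0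
    by_cases h1 : a = i
    · by_cases h2 : (0 : Fin 2) = i
      · by_cases h3 : a = j
        · apply psd_col_zero hC (z2 _ _ _ _)
          subst h1 h3; rw [← h2]; simp
        · exact psd_col_zero hC (z1 _ _ _ h3) _
      · exact psd_row_zero hC (z2 _ _ _ h2) _
    · exact psd_row_zero hC (z1 _ _ _ h1) _
  have h := congrFun (congrFun (hL 0 _ isState_plus) 0) 1
  rw [hJ0] at h
  simp only [ptraceL, Fin.sum_univ_one, Fin.isValue, map_smul, map_add, Matrix.smul_apply,
    Matrix.add_apply, key, Fin.sum_univ_two] at h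
  simp [Matrix.single] at h

/-- The channel `ρ ↦ ρ ⊗ 1/2`. -/
def appendMixed : MatMap (Fin 2) (Fin 2 × Fin 2) where
  toFun ρ := ρ ⊗ₖ ((1 / 2 : ℂ) • (1 : Matrix (Fin 2) (Fin 2) ℂ))
  map_add' a b := Matrix.add_kronecker _ _ _
  map_smul' c a := Matrix.smul_kronecker _ _ _

theorem appendMixed_cp : IsCP appendMixed := by
  let B : Matrix (Fin 2) (Fin 2 × (Fin 2 × Fin 2)) ℂ :=
    Matrix.of fun v p => if p.1 = p.2.1 ∧ v = p.2.2 then 1 else 0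
  have hB : ∀ v p, B v p = if p.1 = p.2.1 ∧ v = p.2.2 then 1 else 0 := fun _ _ => rfl
  have h : choiMatrix appendMixed = (1 / 2 : ℂ) • (Bᴴ * B) := by
    ext ⟨i, k, v⟩ ⟨j, l, w⟩
    simp only [choiMatrix, appendMixed, LinearMap.coe_mk, AddHom.coe_mk,
      Matrix.kroneckerMap_apply, Matrix.smul_apply, Matrix.mul_apply, Fin.sum_univ_two,
      Matrix.conjTranspose_apply, hB, Matrix.single_apply, Matrix.one_apply]
    fin_cases v <;> fin_cases w <;> by_cases h1 : i = k <;> by_cases h2 : j = l <;>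
      simp [h1, h2]
  unfold IsCP
  rw [h]
  exact (Matrix.posSemidef_conjTranspose_mul_self B).smul (by norm_num [Complex.le_def])

theorem appendMixed_tp : IsTP appendMixed := by
  intro ρ
  change (ρ ⊗ₖ ((1 / 2 : ℂ) • (1 : Matrix (Fin 2) (Fin 2) ℂ))).trace = _
  rw [Matrix.trace_kronecker]
  simp

/-- The qubit identity instrument `I` and the instrument
`J_i(ρ) = (1/4) σ_i ρ σ_i` are incompatible, although their induced channels are
compatible and their induced POVMs are compatible. -/
theorem identity_and_pauli_twirl_incompatible
    (I : Instrument (Fin 1) (Fin 2) (Fin 2))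
    (hI : ∀ ρ : Matrix (Fin 2) (Fin 2) ℂ, I.op 0 ρ = ρ)
    (J : Instrument (Fin 4) (Fin 2) (Fin 2))
    (hJ : ∀ i, ∀ ρ : Matrix (Fin 2) (Fin 2) ℂ,
      J.op i ρ = (1 / 4 : ℂ) • (pauli i * ρ * pauli i))
    (ΦI : Channel (Fin 2) (Fin 2)) (hΦI : ΦI.map = ∑ x, I.op x)
    (ΦJ : Channel (Fin 2) (Fin 2)) (hΦJ : ΦJ.map = ∑ y, J.op y)
    (AI : POVM (Fin 1) (Fin 2)) (hAI : ∀ x, AI.elem x = dualId (I.op x))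
    (AJ : POVM (Fin 4) (Fin 2)) (hAJ : ∀ y, AJ.elem y = dualId (J.op y)) :
    ¬ InsCompatible I J ∧ ChCompatible ΦI ΦJ ∧ POVMCompatible AI AJ := by
  refine ⟨not_insCompatible_aux I hI J hJ, ⟨⟨appendMixed, appendMixed_cp, appendMixed_tp⟩, ?_, ?_⟩,
    ⟨⟨fun p => AJ.elem p.2, fun p => AJ.pos p.2, ?_⟩, ?_, ?_⟩⟩
  · intro ρ _
    rw [hΦJ, LinearMap.sum_apply]
    simp only [hJ]
    ext i j
    simp only [ptraceL, appendMixed, LinearMap.coe_mk, AddHom.coe_mk, Matrix.kroneckerMap_apply,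
      Fin.sum_univ_two, Fin.sum_univ_four, Matrix.add_apply, Matrix.smul_apply, Matrix.mul_apply,
      pauli]
    fin_cases i <;> fin_cases j <;> simp <;> ring_nf <;> simp <;> ring
  · intro ρ _
    rw [hΦI]
    simp only [Fin.sum_univ_one, Fin.isValue, hI]
    ext i j
    simp only [ptraceR, appendMixed, LinearMap.coe_mk, AddHom.coe_mk, Matrix.kroneckerMap_apply,
      Fin.sum_univ_two]
    simp
    ring
  · rw [Fintype.sum_prod_type]
    simpa using AJ.sum_eq
  · intro y
    simp
  · intro x
    have h := AI.sum_eq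
    rw [Fin.sum_univ_one] at h
    rw [Fin.eq_zero x, h]
    exact AJ.sum_eq
end
end

section
/- Let I ∈ Ins(Ω,H,K) and J ∈ Ins(Λ,H,V) be two instruments. If I is a postprocessing of J (I ⪯ J), then I is compatible with the induced POVM A^J; in particular, Φ^I is compatible with A^J and A^I is compatible with A^J. -/
open scoped Kronecker ComplexOrder
open Matrix

noncomputable section

variable {Ω Λ dH dK dV dA dA' : Type}

theorem aux_apply [Fintype dH] [DecidableEq dH] (Φ : MatMap dH dK) (ρ : Matrix dH dH ℂ)
    (k l : dK) : Φ ρ k l = ∑ i, ∑ j, ρ i j * choiMatrix Φ (i, k) (j, l) := by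
  conv_lhs => rw [Matrix.matrix_eq_sum_single ρ]
  simp only [map_sum, Matrix.sum_apply]
  refine Finset.sum_congr rfl fun i _ => Finset.sum_congr rfl fun j _ => ?_
  have : Matrix.single i j (ρ i j) = ρ i j • Matrix.single i j (1 : ℂ) := by
    simp [Matrix.smul_single]
  rw [this, map_smul]
  rfl

open scoped MatrixOrder in
theorem aux_factor {n : Type} [Fintype n] {M : Matrix n n ℂ}
    (h : M.PosSemidef) : ∃ B : Matrix n n ℂ, ∀ i j, M i j = ∑ r, star (B r i) * B r j := by
  classical
  obtain ⟨B, hB⟩ := (CStarAlgebra.nonneg_iff_eq_star_mul_self (a := M)).mp h.nonneg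
  refine ⟨B, fun i j => ?_⟩
  rw [hB]
  simp [Matrix.mul_apply, Matrix.star_apply]

theorem aux_sums {ι R S : Type} [Fintype ι] [Fintype R] [Fintype S] (u v : R → ι → ℂ)
    (p q : S → ι → ℂ) :
    ∑ a, ∑ b, (∑ r, u r a * v r b) * (∑ s, p s a * q s b) =
      ∑ rs : R × S, (∑ a, u rs.1 a * p rs.2 a) * (∑ b, v rs.1 b * q rs.2 b) := by
  simp only [Finset.sum_mul_sum, Fintype.sum_prod_type]
  simp only [← Fintype.sum_prod_type'
    (f := fun a b => ∑ r, ∑ s, u r a * v r b * (p s a * q s b))]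
  rw [Finset.sum_comm]
  refine Finset.sum_congr rfl fun r _ => ?_
  rw [Finset.sum_comm]
  refine Finset.sum_congr rfl fun s _ => ?_
  rw [Fintype.sum_prod_type]
  refine Finset.sum_congr rfl fun _ _ => Finset.sum_congr rfl fun _ _ => ?_
  ring

theorem aux_comp_cp [Fintype dH] [DecidableEq dH] [Fintype dK] [Fintype dV] [DecidableEq dV]
    (Ψ : MatMap dV dK) (Φ : MatMap dH dV) (hΨ : IsCP Ψ) (hΦ : IsCP Φ) : IsCP (Ψ ∘ₗ Φ) := by
  obtain ⟨B, hB⟩ := aux_factor hΦ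
  obtain ⟨D, hD⟩ := aux_factor hΨ
  let M : Matrix ((dH × dV) × (dV × dK)) (dH × dK) ℂ :=
    fun rs p => ∑ a, B rs.1 (p.1, a) * D rs.2 (a, p.2)
  have : choiMatrix (Ψ ∘ₗ Φ) = Mᴴ * M := by
    ext ⟨i, k⟩ ⟨j, l⟩
    have h1 : choiMatrix (Ψ ∘ₗ Φ) (i, k) (j, l) =
        ∑ a, ∑ b, choiMatrix Φ (i, a) (j, b) * choiMatrix Ψ (a, k) (b, l) :=
      aux_apply Ψ (Φ (Matrix.single i j 1)) k l
    rw [h1, Matrix.mul_apply]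
    simp only [hB, hD]
    refine (aux_sums (fun r a => star (B r (i, a))) (fun r b => B r (j, b))
      (fun s a => star (D s (a, k))) (fun s b => D s (b, l))).trans ?_
    refine Finset.sum_congr rfl fun rs _ => ?_
    rw [Matrix.conjTranspose_apply]
    simp [M]
  unfold IsCP
  rw [this]
  exact Matrix.posSemidef_conjTranspose_mul_self M

theorem aux_pos [Fintype dH] [DecidableEq dH] [Fintype dK]
    (Φ : MatMap dH dK) (hΦ : IsCP Φ) {ρ : Matrix dH dH ℂ} (hρ : ρ.PosSemidef) :
    (Φ ρ).PosSemidef := by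
  obtain ⟨B, hB⟩ := aux_factor hρ
  obtain ⟨D, hD⟩ := aux_factor hΦ
  let M : Matrix (dH × (dH × dK)) dK ℂ :=
    fun rs p => ∑ a, B rs.1 a * D rs.2 (a, p)
  have : Φ ρ = Mᴴ * M := by
    ext k l
    rw [aux_apply, Matrix.mul_apply]
    simp only [hB, hD]
    refine (aux_sums (fun r a => star (B r a)) (fun r b => B r b)
      (fun s a => star (D s (a, k))) (fun s b => D s (b, l))).trans ?_
    refine Finset.sum_congr rfl fun rs _ => ?_
    rw [Matrix.conjTranspose_apply]
    simp [M]
  rw [this]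
  exact Matrix.posSemidef_conjTranspose_mul_self M

theorem aux_dualId_pos [Fintype dH] [DecidableEq dH] [Fintype dK]
    (Φ : MatMap dH dK) (hΦ : IsCP Φ) : (dualId Φ).PosSemidef := by
  have : dualId Φ = ∑ k, ((choiMatrix Φ).submatrix (fun i => (i, k)) (fun i => (i, k)))ᵀ := by
    ext i j
    simp [Matrix.sum_apply, dualId, choiMatrix, Matrix.trace]
  rw [this]
  exact Matrix.posSemidef_sum _ fun k _ => (hΦ.submatrix _).transpose

theorem aux_dualId_sum {ι : Type} [Fintype ι] [Fintype dH] [DecidableEq dH] [Fintype dK]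
    (F : ι → MatMap dH dK) : dualId (∑ x, F x) = ∑ x, dualId (F x) := by
  ext i j
  simp [Matrix.sum_apply, dualId, Matrix.trace_sum]

theorem aux_cp_sum {ι : Type} [Fintype ι] [Fintype dH] [DecidableEq dH] [Fintype dK]
    (F : ι → MatMap dH dK) (h : ∀ x, IsCP (F x)) : IsCP (∑ x, F x) := by
  have : choiMatrix (∑ x, F x) = ∑ x, choiMatrix (F x) := by
    ext i j
    simp [Matrix.sum_apply, choiMatrix]
  unfold IsCP
  rw [this]
  exact Matrix.posSemidef_sum _ fun x _ => h x

theorem aux_dualId_tp [Fintype dH] [DecidableEq dH] [Fintype dK]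
    (Φ : MatMap dH dK) (h : IsTP Φ) : dualId Φ = 1 := by
  ext i j
  rw [dualId, h, Matrix.one_apply]
  split_ifs with hij
  · subst hij; simp
  · exact Matrix.trace_single_eq_of_ne _ _ _ (Ne.symm hij)

theorem aux_tni_of_sum {ι : Type} [Fintype ι] [Fintype dH] [DecidableEq dH] [Fintype dK]
    (F : ι → MatMap dH dK) (h : ∀ x, IsCP (F x)) (ht : IsTP (∑ x, F x)) (x : ι) :
    IsTNI (F x) := by
  intro ρ hρ
  rw [← ht ρ, LinearMap.sum_apply, Matrix.trace_sum]
  exact Finset.single_le_sum (f := fun x => (F x ρ).trace)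
    (fun x _ => (aux_pos (F x) (h x) hρ).trace_nonneg) (Finset.mem_univ x)

/-- an instrument from CP maps with trace-preserving sum -/
def auxIns {ι : Type} [Fintype ι] [Fintype dH] [DecidableEq dH] [Fintype dK]
    (F : ι → MatMap dH dK) (h : ∀ x, IsCP (F x)) (ht : IsTP (∑ x, F x)) :
    Instrument ι dH dK := ⟨F, h, aux_tni_of_sum F h ht, ht⟩

/-- If `I` is a postprocessing of `J`, then `I` is compatible with the
induced POVM `A^J`; in particular `Φ^I` is compatible with `A^J` and `A^I` is
compatible with `A^J`. -/
theorem postprocessing_implies_povm_compatibility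
    [Fintype Ω] [Fintype Λ] [Fintype dH] [DecidableEq dH] [Fintype dK] [DecidableEq dK]
    [Fintype dV] [DecidableEq dV]
    (I : Instrument Ω dH dK) (J : Instrument Λ dH dV)
    (AI : POVM Ω dH) (hAI : ∀ x, AI.elem x = dualId (I.op x))
    (AJ : POVM Λ dH) (hAJ : ∀ y, AJ.elem y = dualId (J.op y))
    (ΦI : Channel dH dK) (hΦI : ΦI.map = ∑ x, I.op x)
    (hpp : Postprocessed I J) :
    POVMInsCompatible AJ I ∧ POVMChCompatible AJ ΦI ∧ POVMCompatible AI AJ := by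
  obtain ⟨R, hR⟩ := hpp
  have hcp : ∀ y x, IsCP ((R y).op x ∘ₗ J.op y) := fun y x =>
    aux_comp_cp _ _ ((R y).cp x) (J.cp y)
  have hsum : ∑ x, I.op x = ∑ y, ∑ x, (R y).op x ∘ₗ J.op y := by
    rw [Finset.sum_comm]
    exact Finset.sum_congr rfl fun x _ => hR x
  have hdual : ∀ y, ∑ x, dualId ((R y).op x ∘ₗ J.op y) = AJ.elem y := by
    intro y
    rw [hAJ, ← aux_dualId_sum]
    ext i j
    have := (R y).tp (J.op y (Matrix.single j i 1))
    simpa [dualId] using this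
  refine ⟨⟨auxIns (fun p : Λ × Ω => (R p.1).op p.2 ∘ₗ J.op p.1) (fun p => hcp _ _) ?_,
      fun x => (hR x).symm, hdual⟩,
    ⟨auxIns (fun y => ∑ x, (R y).op x ∘ₗ J.op y) (fun y => aux_cp_sum _ (hcp y)) ?_, ?_, ?_⟩,
    ⟨⟨fun p => dualId ((R p.2).op p.1 ∘ₗ J.op p.2), fun p => aux_dualId_pos _ (hcp _ _), ?_⟩,
      hdual, ?_⟩⟩
  · rw [Fintype.sum_prod_type, ← hsum]
    exact I.tp
  · rw [← hsum]
    exact I.tp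
  · rw [hΦI]
    exact hsum.symm
  · intro y
    exact (aux_dualId_sum _).trans (hdual y)
  · rw [Fintype.sum_prod_type, Finset.sum_comm]
    simp only [hdual]
    exact AJ.sum_eq
  · intro x
    rw [hAI, hR, aux_dualId_sum]
end
end
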